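/- Let 𝒜, 𝒜' and 𝓑 be reduced inverse automata over Ã such that 𝒜' is obtained from 𝒜 by a reduced expansion σ₁ and 𝓑 is obtained from 𝒜' by an i-step σ₂. Then there exists a sequence σ̄' of one or two steps, each an i-step or a reduced expansion, transforming 𝒜 into 𝓑 and satisfying λ(σ̄') ≺ λ(σ₁, σ₂). -/

import Mathlib

open Function

/-- A letter of the symmetrized alphabet Ã: `(a, true)` stands for `a ∈ A` and
`(a, false)` for `a⁻¹ ∈ A⁻¹`. -/
abbrev Ltr (A : Type) := A × Bool

/-- Inversion of letters of Ã. -/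
def Ltr.inv {A : Type} (x : Ltr A) : Ltr A := (x.1, !x.2)

/-- The inverse `u⁻¹` of a word `u` over Ã. -/
def wordInv {A : Type} (w : List (Ltr A)) : List (Ltr A) := (w.map Ltr.inv).reverse

/-- A word over Ã is reduced iff it has no factor of the form `a a⁻¹` or `a⁻¹ a`. -/
def IsReducedWord {A : Type} (w : List (Ltr A)) : Prop :=
  ∀ (u v : List (Ltr A)) (a : A) (b : Bool), w ≠ u ++ (a, b) :: (a, !b) :: v

/-- An automaton over the symmetrized alphabet Ã, with a bundled state type `Q`,
an initial state `q0` and a set `E` of transitions. -/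
structure Autom (A : Type) : Type 1 where
  Q : Type
  q0 : Q
  E : Set (Q × Ltr A × Q)

namespace Autom

variable {A : Type}

/-- Paths using only transitions in the set `T`. -/
inductive PathOn (M : Autom A) (T : Set (M.Q × Ltr A × M.Q)) :
    M.Q → List (Ltr A) → M.Q → Prop
  | nil (q : M.Q) : PathOn M T q [] q
  | cons {p q r : M.Q} {a : Ltr A} {w : List (Ltr A)} :
      (p, a, q) ∈ T → PathOn M T q w r → PathOn M T p (a :: w) r

/-- `M.Path p u q` : the word `u` labels a path from state `p` to state `q` in `M`. -/
def Path (M : Autom A) : M.Q → List (Ltr A) → M.Q → Prop := M.PathOn M.E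

/-- The language L(𝒜) of words labeling a path from `q0` to `q0`. -/
def lang (M : Autom A) : Set (List (Ltr A)) := {w | M.Path M.q0 w M.q0}

/-- The set L(𝒜)ρ of reductions (in the free group `F(A)`) of words of L(𝒜). -/
def langRho (M : Autom A) : Set (FreeGroup A) := FreeGroup.mk '' M.lang

/-- Dual automaton: `(p,a,q)` is an edge iff `(q,a⁻¹,p)` is one. -/
def Dual (M : Autom A) : Prop := ∀ p a q, (p, a, q) ∈ M.E ↔ (q, Ltr.inv a, p) ∈ M.E

/-- Deterministic automaton. -/
def Deterministic (M : Autom A) : Prop :=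
  ∀ p a q q', (p, a, q) ∈ M.E → (p, a, q') ∈ M.E → q = q'

/-- Trim automaton: every state lies on a path from `q0` to `q0`. -/
def Trim (M : Autom A) : Prop := ∀ q, ∃ u v, M.Path M.q0 u q ∧ M.Path q v M.q0

/-- Inverse automaton: deterministic, trim and dual. -/
def IsInv (M : Autom A) : Prop := M.Deterministic ∧ M.Trim ∧ M.Dual

/-- Reduced automaton: every state lies on a path from `q0` to `q0` labeled by
a reduced word. -/
def IsRed (M : Autom A) : Prop :=
  ∀ q, ∃ u v, IsReducedWord (u ++ v) ∧ M.Path M.q0 u q ∧ M.Path q v M.q0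

/-- Homomorphisms of automata. -/
def IsHom (M N : Autom A) (φ : M.Q → N.Q) : Prop :=
  φ M.q0 = N.q0 ∧ ∀ p a q, (p, a, q) ∈ M.E → (φ p, a, φ q) ∈ N.E

/-- Isomorphism of automata. -/
def Isomorphic (M N : Autom A) : Prop :=
  ∃ φ : M.Q ≃ N.Q, M.IsHom N φ ∧ N.IsHom M φ.symm

/-- `N` is (isomorphic to) the automaton obtained from `M` by identifying the two
states `p` and `q`. -/
def IsIdentification (M : Autom A) (p q : M.Q) (N : Autom A) : Prop :=
  ∃ φ : M.Q → N.Q,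
    Surjective φ ∧ φ M.q0 = N.q0 ∧
    (∀ x y, φ x = φ y ↔ x = y ∨ (x = p ∧ y = q) ∨ (x = q ∧ y = p)) ∧
    (∀ e : N.Q × Ltr A × N.Q, e ∈ N.E ↔ ∃ e' ∈ M.E, e = (φ e'.1, e'.2.1, φ e'.2.2))

/-- `N` is (isomorphic to) the automaton obtained from `M` by deleting the state `q`
and all transitions involving it. -/
def IsDeletion (M : Autom A) (q : M.Q) (N : Autom A) : Prop :=
  ∃ φ : N.Q → M.Q,
    Injective φ ∧ Set.range φ = {x | x ≠ q} ∧ φ N.q0 = M.q0 ∧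
    (∀ e : N.Q × Ltr A × N.Q, e ∈ N.E ↔ (φ e.1, e.2.1, φ e.2.2) ∈ M.E)

/-- Elementary reduction of type 1. -/
def Red1 (M N : Autom A) : Prop :=
  ∃ p q r a, p ≠ q ∧ (r, a, p) ∈ M.E ∧ (r, a, q) ∈ M.E ∧ M.IsIdentification p q N

/-- Elementary reduction of type 2. -/
def Red2 (M N : Autom A) : Prop :=
  ∃ (p q : M.Q) (a : Ltr A), q ≠ M.q0 ∧ (p, a, q) ∈ M.E ∧ (q, Ltr.inv a, p) ∈ M.E ∧
    (∀ e ∈ M.E, e.1 = q ∨ e.2.2 = q → e = (p, a, q) ∨ e = (q, Ltr.inv a, p)) ∧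
    M.IsDeletion q N

/-- `N` is (isomorphic to) the reduction `Mρ` of `M`: perform elementary reductions
of type 1 until the automaton is deterministic, then elementary reductions of type 2
until none is possible. -/
def ReductionOf (M N : Autom A) : Prop :=
  ∃ M₁, Relation.ReflTransGen Red1 M M₁ ∧ M₁.Deterministic ∧
    Relation.ReflTransGen Red2 M₁ N ∧ ∀ N', ¬ Red2 N N'

/-- `N` is (isomorphic to) the expansion of `M` by `(p, w, q)`: a new path labeled `w`
from `p` to `q` (together with its inverse path) whose intermediate states are new. -/
def IsExpansion (M : Autom A) (p : M.Q) (w : List (Ltr A)) (q : M.Q) (N : Autom A) : Prop :=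
  w ≠ [] ∧
  ∃ (φ : M.Q → N.Q) (c : Fin (w.length + 1) → N.Q),
    Injective φ ∧ φ M.q0 = N.q0 ∧ c 0 = φ p ∧ c (Fin.last w.length) = φ q ∧
    (∀ i : Fin (w.length + 1), 0 < (i : ℕ) → (i : ℕ) < w.length → c i ∉ Set.range φ) ∧
    (∀ i j : Fin (w.length + 1), 0 < (i : ℕ) → (i : ℕ) < w.length → c i = c j → i = j) ∧
    (∀ x : N.Q, (∃ y, φ y = x) ∨ ∃ i, c i = x) ∧
    (∀ e : N.Q × Ltr A × N.Q, e ∈ N.E ↔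
      ((∃ e' ∈ M.E, e = (φ e'.1, e'.2.1, φ e'.2.2)) ∨
        ∃ i : Fin w.length,
          e = (c i.castSucc, w.get i, c i.succ) ∨
          e = (c i.succ, Ltr.inv (w.get i), c i.castSucc)))

/-- `M →exp^{(p,w,q)} N` : `N` is (isomorphic to) the reduction of the expansion
of `M` by `(p,w,q)`. -/
def ExpStep (M : Autom A) (p : M.Q) (w : List (Ltr A)) (q : M.Q) (N : Autom A) : Prop :=
  ∃ N' N'', M.IsExpansion p w q N' ∧ ReductionOf N' N'' ∧ Isomorphic N'' N

/-- `M →re^{(p,w,q)} N` : a reduced expansion, i.e. an expansion-then-reduction in which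
`M` embeds in `N`. -/
def REStep (M : Autom A) (p : M.Q) (w : List (Ltr A)) (q : M.Q) (N : Autom A) : Prop :=
  M.ExpStep p w q N ∧ ∃ ψ : M.Q → N.Q, Injective ψ ∧ M.IsHom N ψ

/-- `M →e^{w} N` : an e-step, i.e. `M →exp^{(q0,w,q0)} N`. -/
def EStep (M : Autom A) (w : List (Ltr A)) (N : Autom A) : Prop :=
  M.ExpStep M.q0 w M.q0 N

/-- `M →i^{p=q} N` : an i-step; `N` is (isomorphic to) the reduction of the automaton
obtained from `M` by identifying the distinct states `p` and `q`. -/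
def IStep (M : Autom A) (p q : M.Q) (N : Autom A) : Prop :=
  p ≠ q ∧ ∃ N' N'', M.IsIdentification p q N' ∧ ReductionOf N' N'' ∧ Isomorphic N'' N

/-- i-step, allowing `p = q` (in which case nothing happens). -/
def IStep' (M : Autom A) (p q : M.Q) (N : Autom A) : Prop :=
  (p = q ∧ M.Isomorphic N) ∨ M.IStep p q N

/-- `M →i N` : some i-step applies. -/
def IStepAny (M N : Autom A) : Prop := ∃ p q, M.IStep p q N

/-- Some reduced expansion (by a nonempty reduced word) applies. -/
def REStepAny (M N : Autom A) : Prop :=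
  ∃ p w q, IsReducedWord w ∧ M.REStep p w q N

/-- `M` is (isomorphic to) `Γ_A(H)` : a reduced inverse automaton with `L(M)ρ = H`. -/
def Represents (M : Autom A) (H : Subgroup (FreeGroup A)) : Prop :=
  M.IsInv ∧ M.IsRed ∧ M.langRho = ↑H

/-- The `q0`-diameter of an automaton: the maximum over all states `q` of the minimal
length of a reduced word labeling a path from `q0` to `q`. -/
noncomputable def diam (M : Autom A) : ℕ :=
  ⨆ q : M.Q, sInf {n | ∃ u, IsReducedWord u ∧ u.length = n ∧ M.Path M.q0 u q}

end Autom

/-- `S` is a basis of the subgroup `H`: `S` generates `H` and freely so. -/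
def IsFreeBasis {G : Type} [Group G] (S : Set G) (H : Subgroup G) : Prop :=
  Subgroup.closure S = H ∧
    Injective (FreeGroup.lift (Subtype.val : S → G) : FreeGroup S →* G)

/-- `H ≤ff K` : `H` is a free factor of `K`. -/
def FreeFactor {G : Type} [Group G] (H K : Subgroup G) : Prop :=
  ∃ B C : Set G, IsFreeBasis B H ∧ IsFreeBasis C K ∧ B ⊆ C

/-- The rank of a subgroup: the cardinality of a basis (the common value of
the cardinalities of all bases, when `H` is a finite-rank free group). -/
noncomputable def rk {G : Type} [Group G] (H : Subgroup G) : ℕ :=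
  sInf {n | ∃ S : Set G, IsFreeBasis S H ∧ S.ncard = n}

/-- `L` is a graphical free factor of `K` with respect to `A`: `Γ_A(L)` embeds
in `Γ_A(K)`. -/
def GraphicalFF {A : Type} (L K : Subgroup (FreeGroup A)) : Prop :=
  L ≤ K ∧ ∃ ML MK : Autom A, ML.Represents L ∧ MK.Represents K ∧
    ∃ ψ : ML.Q → MK.Q, Injective ψ ∧ ML.IsHom MK ψ

/-- A step (i-step or reduced expansion) from `M` to `N` of cost `c`. -/
def StepCost {A : Type} (M N : Autom A) (c : ℕ) : Prop :=
  (c = 0 ∧ Autom.IStepAny M N) ∨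
  (∃ p w q, IsReducedWord w ∧ w.length = c ∧ M.REStep p w q N)

/-- The well-order `≺` on cost sequences. -/
def costLT (k l : List ℕ) : Prop :=
  k.length < l.length ∨
  (k.length = l.length ∧ k.sum < l.sum) ∨
  (k.length = l.length ∧ k.sum = l.sum ∧ List.Lex (· < ·) k l)

/-!
Attaching a path labeled `w` from `p` to `q` and reducing yields the initial extension of `M`, among
deterministic dual automata, in which `w` labels a path from `p` to `q`; identifying `p` and `q` is
the case `w = []`. An extension given by such a universal property is therefore a step, up to two
corrections: letters of `w` that can already be read from its ends are removed for free, and once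
none is left `M` embeds, so that the expansion is reduced.

The states `r` and `s` identified by the i-step are reached along paths from states of `M`, so the
composite of the two given steps is the initial extension of `M` satisfying two path conditions, one
for `w` and one expressing `r = s`. These conditions can be imposed in a cheaper order.
If `r` and `s` lie in `M`, identify them first. If `r` lies in `M` and `s` is
reached by a proper prefix `w₁` of `w = w₁w₂`, attach `w₁` from `p` to `r`, then `w₂` from `r` to
`q`. If `r` and `s` are reached by `w₁` and `w₁u`, where `w = w₁uw₂`, write `w₁ = x₁v` and
`w₂ = v⁻¹x₂` with `x₁x₂` reduced, attach `x₁x₂` from `p` to `q`, then `vuv⁻¹` as a loop at the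
end of `x₁`.
-/

section Words

variable {A : Type}

@[simp] lemma Ltr.inv_inv (a : Ltr A) : a.inv.inv = a := by
  simp [Ltr.inv]

lemma Ltr.inv_ne (a : Ltr A) : a.inv ≠ a := by
  simp [Ltr.inv, Prod.ext_iff]

@[simp] lemma wordInv_nil : wordInv ([] : List (Ltr A)) = [] := rfl

@[simp] lemma wordInv_cons (a : Ltr A) (w : List (Ltr A)) :
    wordInv (a :: w) = wordInv w ++ [a.inv] := by
  simp [wordInv]

@[simp] lemma wordInv_append (u v : List (Ltr A)) :
    wordInv (u ++ v) = wordInv v ++ wordInv u := by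
  simp [wordInv]

@[simp] lemma wordInv_wordInv (w : List (Ltr A)) : wordInv (wordInv w) = w :=
  FreeGroup.invRev_invRev

@[simp] lemma length_wordInv (w : List (Ltr A)) : (wordInv w).length = w.length :=
  FreeGroup.invRev_length

lemma isReducedWord_iff_isReduced {w : List (Ltr A)} :
    IsReducedWord w ↔ FreeGroup.IsReduced w := by
  unfold IsReducedWord FreeGroup.IsReduced
  rw [List.isChain_iff_forall_rel_of_append_cons_cons]
  constructor
  · rintro h ⟨a, b⟩ ⟨a', b'⟩ u v rfl rfl
    have hne : b' ≠ !b := by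
      rintro rfl
      exact h u v a b rfl
    simpa using hne.symm
  · rintro h u v a b rfl
    simpa using h rfl rfl

lemma isReducedWord_cons_cons {a b : Ltr A} {w : List (Ltr A)} :
    IsReducedWord (a :: b :: w) ↔ b ≠ a.inv ∧ IsReducedWord (b :: w) := by
  obtain ⟨a, i⟩ := a
  obtain ⟨b, j⟩ := b
  simp only [isReducedWord_iff_isReduced, FreeGroup.isReduced_cons_cons, Ltr.inv]
  cases i <;> cases j <;> simp [eq_comm]

namespace IsReducedWord

variable {u v w : List (Ltr A)}

lemma of_infix (hw : IsReducedWord w) (h : u <:+: w) : IsReducedWord u :=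
  isReducedWord_iff_isReduced.2 ((isReducedWord_iff_isReduced.1 hw).infix h)

lemma left (h : IsReducedWord (u ++ v)) : IsReducedWord u :=
  h.of_infix (List.prefix_append u v).isInfix

lemma right (h : IsReducedWord (u ++ v)) : IsReducedWord v :=
  h.of_infix (List.suffix_append u v).isInfix

lemma append_overlap (huv : IsReducedWord (u ++ v)) (hvw : IsReducedWord (v ++ w))
    (hv : v ≠ []) : IsReducedWord (u ++ v ++ w) := by
  rw [isReducedWord_iff_isReduced] at *
  exact huv.append_overlap hvw hv

protected lemma wordInv (h : IsReducedWord w) : IsReducedWord (wordInv w) := by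
  rintro u v a b huv
  refine h (wordInv v) (wordInv u) a b ?_
  rw [← wordInv_wordInv w, huv]
  simp [Ltr.inv]

lemma append_or_exists_cons (hu : IsReducedWord u) (hv : IsReducedWord v) :
    IsReducedWord (u ++ v) ∨ ∃ u' a v', u = u' ++ [a] ∧ v = Ltr.inv a :: v' := by
  rcases u.eq_nil_or_concat' with rfl | ⟨u', a, rfl⟩
  · exact .inl hv
  cases v with
  | nil => simpa using hu
  | cons b v' =>
    by_cases hb : b = a.inv
    · exact .inr ⟨u', a, v', rfl, by rw [hb]⟩
    · have hab : IsReducedWord ([a] ++ b :: v') := isReducedWord_cons_cons.2 ⟨hb, hv⟩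
      exact .inl (by simpa using append_overlap hu hab (by simp))

lemma exists_cancel (hu : IsReducedWord u) (hv : IsReducedWord v) :
    ∃ u' x v', u = u' ++ x ∧ v = wordInv x ++ v' ∧ IsReducedWord (u' ++ v') := by
  induction u using List.reverseRecOn generalizing v with
  | nil => exact ⟨[], [], v, rfl, rfl, hv⟩
  | append_singleton u₀ a ih =>
    rcases hu.append_or_exists_cons hv with h | ⟨u₁, b, v₀, hub, rfl⟩
    · exact ⟨u₀ ++ [a], [], v, by simp, rfl, h⟩
    obtain ⟨rfl, hab⟩ := List.append_inj' hub rfl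
    obtain rfl : a = b := by simpa using hab
    obtain ⟨u', x, v', rfl, rfl, hred⟩ := ih hu.left (right (u := [a.inv]) hv)
    exact ⟨u', x ++ [a], v', by simp, by simp, hred⟩

lemma exists_eq_append_inv {a : Ltr A} (h : IsReducedWord (a :: u))
    (ha : a ∈ (wordInv u).head?) :
    ∃ v ≠ [], u = v ++ [a.inv] ∧ IsReducedWord (a :: v) ∧ IsReducedWord (a :: wordInv v) := by
  obtain ⟨v, hv⟩ := List.head?_eq_some_iff.1 ha
  have hu : u = wordInv v ++ [a.inv] := by
    rw [← wordInv_wordInv u, hv, wordInv_cons]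
  refine ⟨wordInv v, ?_, hu, left (v := [a.inv]) (by simpa [hu] using h), ?_⟩
  · intro hv0
    rw [hu, hv0] at h
    exact (isReducedWord_cons_cons.1 h).1 rfl
  · rw [wordInv_wordInv, ← hv]
    exact (right (u := [a]) h).wordInv

end IsReducedWord

end Words

namespace Autom

variable {A : Type} {M N Z : Autom A}

section Paths

@[simp] lemma path_nil_iff {p q : M.Q} : M.Path p [] q ↔ p = q := by
  constructor
  · rintro ⟨⟩
    rfl
  · rintro rfl
    exact .nil p

lemma path_cons_iff {p q : M.Q} {a : Ltr A} {w : List (Ltr A)} :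
    M.Path p (a :: w) q ↔ ∃ r, (p, a, r) ∈ M.E ∧ M.Path r w q := by
  constructor
  · rintro (_ | ⟨ha, hw⟩)
    exact ⟨_, ha, hw⟩
  · rintro ⟨r, ha, hw⟩
    exact .cons ha hw

@[simp] lemma path_singleton_iff {p q : M.Q} {a : Ltr A} :
    M.Path p [a] q ↔ (p, a, q) ∈ M.E := by
  simp [path_cons_iff]

lemma path_append_iff {p q : M.Q} {u v : List (Ltr A)} :
    M.Path p (u ++ v) q ↔ ∃ r, M.Path p u r ∧ M.Path r v q := by
  induction u generalizing p with
  | nil => simp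
  | cons a u ih =>
    simp only [List.cons_append, path_cons_iff, ih]
    grind

lemma Path.append {p q r : M.Q} {u v : List (Ltr A)} (hu : M.Path p u q)
    (hv : M.Path q v r) : M.Path p (u ++ v) r :=
  path_append_iff.2 ⟨q, hu, hv⟩

lemma Path.map {f : M.Q → N.Q} (hf : M.IsHom N f) {p q : M.Q} {w : List (Ltr A)}
    (h : M.Path p w q) : N.Path (f p) w (f q) := by
  induction w generalizing p with
  | nil => simp_all
  | cons a w ih =>
    obtain ⟨r, ha, hw⟩ := path_cons_iff.1 h
    exact path_cons_iff.2 ⟨f r, hf.2 _ _ _ ha, ih hw⟩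

lemma Deterministic.path_unique (hM : M.Deterministic) {p q q' : M.Q} {w : List (Ltr A)}
    (h : M.Path p w q) (h' : M.Path p w q') : q = q' := by
  induction w generalizing p with
  | nil => simp_all
  | cons a w ih =>
    obtain ⟨r, ha, hw⟩ := path_cons_iff.1 h
    obtain ⟨r', ha', hw'⟩ := path_cons_iff.1 h'
    obtain rfl := hM _ _ _ _ ha ha'
    exact ih hw hw'

lemma Deterministic.path_append_iff (hM : M.Deterministic) {p q r : M.Q} {u v : List (Ltr A)}
    (hu : M.Path p u r) : M.Path p (u ++ v) q ↔ M.Path r v q := by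
  refine ⟨fun h ↦ ?_, hu.append⟩
  obtain ⟨r', hu', hv⟩ := Autom.path_append_iff.1 h
  rwa [hM.path_unique hu hu']

lemma dual_of_forall_inv_mem (h : ∀ p a q, (p, a, q) ∈ M.E → (q, a.inv, p) ∈ M.E) : M.Dual :=
  fun p a q ↦ ⟨h p a q, fun hqp ↦ by simpa using h _ _ _ hqp⟩

lemma Dual.path_wordInv_iff (hM : M.Dual) {p q : M.Q} {w : List (Ltr A)} :
    M.Path q (wordInv w) p ↔ M.Path p w q := by
  induction w generalizing p with
  | nil => simp [eq_comm]
  | cons a w ih =>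
    simp only [wordInv_cons, path_append_iff, ih, path_singleton_iff]
    rw [path_cons_iff]
    exact exists_congr fun r ↦ by rw [← hM, and_comm]

end Paths

section Cores

/-- Stallings folded automata: deterministic and dual, with no accessibility condition. They are
the targets against which universal properties are stated. -/
structure IsFolded (M : Autom A) : Prop where
  det : M.Deterministic
  dual : M.Dual

/-- Accessibility: every state is reached from the initial state. -/
def Accessible (M : Autom A) : Prop := ∀ q, ∃ u, M.Path M.q0 u q

/-- Every state other than the initial one has two outgoing transitions with distinct letters.
This is the local form of the absence of elementary reductions of type 2. -/
def HasMinDegTwo (M : Autom A) : Prop :=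
  ∀ q, q ≠ M.q0 → ∃ a b x y, a ≠ b ∧ (q, a, x) ∈ M.E ∧ (q, b, y) ∈ M.E

/-- Core automata in the sense of Stallings. The conditions are local, whence every reduced inverse
automaton is a core automaton but infinite core automata need not be reduced. -/
structure IsCore (M : Autom A) : Prop extends IsFolded M where
  acc : M.Accessible
  deg : M.HasMinDegTwo

lemma IsInv.isCore (h : M.IsInv) (hred : M.IsRed) : M.IsCore where
  det := h.1
  dual := h.2.2
  acc q := let ⟨u, _, hu, _⟩ := h.2.1 q; ⟨u, hu⟩
  deg q hq := by
    obtain ⟨u, v, huv, hu, hv⟩ := hred q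
    rcases u.eq_nil_or_concat' with rfl | ⟨u, a, rfl⟩
    · exact absurd (path_nil_iff.1 hu).symm hq
    rcases v with _ | ⟨b, v⟩
    · exact absurd (path_nil_iff.1 hv) hq
    obtain ⟨x, _, ha⟩ := path_append_iff.1 hu
    obtain ⟨y, hb, _⟩ := path_cons_iff.1 hv
    have hab : IsReducedWord (a :: b :: v) :=
      IsReducedWord.right (u := u) (by simpa using huv)
    exact ⟨a.inv, b, x, y, (isReducedWord_cons_cons.1 hab).1.symm,
      (h.2.2 _ _ _).1 (path_singleton_iff.1 ha), hb⟩

end Cores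

section Homs

lemma isHom_id (M : Autom A) : M.IsHom M id := ⟨rfl, fun _ _ _ h ↦ h⟩

lemma IsHom.comp {g : N.Q → Z.Q} {f : M.Q → N.Q} (hg : N.IsHom Z g) (hf : M.IsHom N f) :
    M.IsHom Z (g ∘ f) :=
  ⟨(congrArg g hf.1).trans hg.1, fun _ _ _ h ↦ hg.2 _ _ _ (hf.2 _ _ _ h)⟩

lemma IsHom.unique {f g : M.Q → N.Q} (hf : M.IsHom N f) (hg : M.IsHom N g)
    (hM : M.Accessible) (hN : N.Deterministic) : f = g := by
  ext q
  obtain ⟨u, hu⟩ := hM q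
  have hfu := hu.map hf
  have hgu := hu.map hg
  rw [hf.1] at hfu
  rw [hg.1] at hgu
  exact hN.path_unique hfu hgu

lemma IsHom.comp_eq_id {f : M.Q → N.Q} {g : N.Q → M.Q} (hf : M.IsHom N f) (hg : N.IsHom M g)
    (hM : M.Accessible) (hMdet : M.Deterministic) : g ∘ f = id :=
  (hg.comp hf).unique (isHom_id M) hM hMdet

lemma IsHom.isomorphic {f : M.Q → N.Q} {g : N.Q → M.Q} (hf : M.IsHom N f) (hg : N.IsHom M g)
    (hgf : g ∘ f = id) (hfg : f ∘ g = id) : M.Isomorphic N :=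
  ⟨⟨f, g, congrFun hgf, congrFun hfg⟩, hf, hg⟩

lemma Isomorphic.refl (M : Autom A) : M.Isomorphic M := ⟨.refl _, isHom_id M, isHom_id M⟩

lemma Isomorphic.trans (h : M.Isomorphic N) (h' : N.Isomorphic Z) : M.Isomorphic Z := by
  obtain ⟨φ, hφ, hφ'⟩ := h
  obtain ⟨ψ, hψ, hψ'⟩ := h'
  exact ⟨φ.trans ψ, hψ.comp hφ, hφ'.comp hψ'⟩

end Homs

section Collisions

variable {X Y W : Type*}

/-- The points at which a map fails to be injective. State sets are not assumed finite, so
finiteness of this set is what makes folding terminate. -/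
def collisionSet (f : X → Y) : Set X := {x | ∃ y, y ≠ x ∧ f y = f x}

lemma injOn_compl_collisionSet (f : X → Y) : Set.InjOn f (collisionSet f)ᶜ := by
  intro x hx y _ hxy
  by_contra hne
  exact hx ⟨y, Ne.symm hne, hxy.symm⟩

lemma collisionSet_eq_empty {f : X → Y} (hf : Injective f) : collisionSet f = ∅ := by
  ext x
  simpa [collisionSet] using fun y hne hy ↦ hne (hf hy)

lemma finite_preimage_of_finite_collisionSet {f : X → Y} (hf : (collisionSet f).Finite)
    {T : Set Y} (hT : T.Finite) : (f ⁻¹' T).Finite := by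
  have hsub : f ⁻¹' T ⊆ collisionSet f ∪ (f ⁻¹' T ∩ (collisionSet f)ᶜ) := by
    intro x hx
    by_cases h : x ∈ collisionSet f
    exacts [.inl h, .inr ⟨hx, h⟩]
  refine (hf.union (Set.Finite.of_finite_image (f := f) (hT.subset ?_) ?_)).subset hsub
  · exact Set.image_subset_iff.2 Set.inter_subset_left
  · exact (injOn_compl_collisionSet f).mono Set.inter_subset_right

lemma finite_collisionSet_comp {f : X → Y} {g : Y → W} (hf : (collisionSet f).Finite)
    (hg : (collisionSet g).Finite) : (collisionSet (g ∘ f)).Finite := by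
  refine (hf.union (finite_preimage_of_finite_collisionSet hf hg)).subset ?_
  rintro x ⟨y, hne, hy⟩
  by_cases h : f y = f x
  exacts [.inl ⟨y, hne, h⟩, .inr ⟨f y, h, hy⟩]

lemma finite_collisionSet_of_comp {f : X → Y} {g : Y → W}
    (hgf : (collisionSet (g ∘ f)).Finite) (hf : (Set.range f)ᶜ.Finite) :
    (collisionSet g).Finite := by
  have hpre := finite_preimage_of_finite_collisionSet hgf (hf.image g)
  refine (hf.union ((hgf.union hpre).image f)).subset ?_
  rintro x ⟨y, hne, hy⟩
  by_cases hx : x ∈ Set.range f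
  swap
  · exact .inl hx
  obtain ⟨x', rfl⟩ := hx
  refine .inr ⟨x', ?_, rfl⟩
  by_cases hy' : y ∈ Set.range f
  · obtain ⟨y', rfl⟩ := hy'
    exact .inl ⟨y', fun h ↦ hne (congrArg f h), hy⟩
  · exact .inr ⟨y, hy', hy⟩

lemma ncard_collisionSet_lt {f : X → Y} {g : Y → W} (hgf : (collisionSet (g ∘ f)).Finite)
    (hf : Surjective f) {p q : X} (hpq : p ≠ q) (hfpq : f p = f q) :
    (collisionSet g).ncard < (collisionSet (g ∘ f)).ncard := by
  have hq : q ∈ collisionSet (g ∘ f) := ⟨p, hpq, congrArg g hfpq⟩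
  have hp : p ∈ collisionSet (g ∘ f) := ⟨q, hpq.symm, congrArg g hfpq.symm⟩
  have hsub : collisionSet g ⊆ f '' (collisionSet (g ∘ f) \ {q}) := by
    rintro x ⟨y, hne, hy⟩
    obtain ⟨x', rfl⟩ := hf x
    obtain ⟨y', rfl⟩ := hf y
    by_cases hx : x' = q
    · exact ⟨p, ⟨hp, hpq⟩, hfpq.trans (congrArg f hx.symm)⟩
    · exact ⟨x', ⟨⟨y', fun h ↦ hne (congrArg f h), hy⟩, hx⟩, rfl⟩
  calc (collisionSet g).ncard
      ≤ (f '' (collisionSet (g ∘ f) \ {q})).ncard := Set.ncard_le_ncard hsub (hgf.sdiff.image f)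
    _ ≤ (collisionSet (g ∘ f) \ {q}).ncard := Set.ncard_image_le hgf.sdiff
    _ < (collisionSet (g ∘ f)).ncard := Set.ncard_sdiff_singleton_lt_of_mem hq hgf

end Collisions

section Quotients

/-- `f` exhibits `N` as a quotient of `M`. -/
structure IsQuotient (M N : Autom A) (f : M.Q → N.Q) : Prop where
  hom : M.IsHom N f
  surj : Surjective f
  lift_edge : ∀ x a y, (x, a, y) ∈ N.E → ∃ x' y', (x', a, y') ∈ M.E ∧ f x' = x ∧ f y' = y

namespace IsQuotient

variable {f : M.Q → N.Q}

lemma comp {g : N.Q → Z.Q} (hg : IsQuotient N Z g) (hf : IsQuotient M N f) :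
    IsQuotient M Z (g ∘ f) where
  hom := hg.hom.comp hf.hom
  surj := hg.surj.comp hf.surj
  lift_edge x a y h := by
    obtain ⟨x₁, y₁, h₁, rfl, rfl⟩ := hg.lift_edge x a y h
    obtain ⟨x₂, y₂, h₂, rfl, rfl⟩ := hf.lift_edge x₁ a y₁ h₁
    exact ⟨x₂, y₂, h₂, rfl, rfl⟩

lemma dual (hf : IsQuotient M N f) (hM : M.Dual) : N.Dual := by
  apply dual_of_forall_inv_mem
  intro x a y h
  obtain ⟨x', y', h', rfl, rfl⟩ := hf.lift_edge x a y h
  exact hf.hom.2 _ _ _ ((hM _ _ _).1 h')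

lemma accessible (hf : IsQuotient M N f) (hM : M.Accessible) : N.Accessible := by
  intro x
  obtain ⟨x', rfl⟩ := hf.surj x
  obtain ⟨u, hu⟩ := hM x'
  exact ⟨u, hf.hom.1 ▸ hu.map hf.hom⟩

lemma hasMinDegTwo (hf : IsQuotient M N f) (hM : M.HasMinDegTwo) : N.HasMinDegTwo := by
  intro x hx
  obtain ⟨x', rfl⟩ := hf.surj x
  have hx' : x' ≠ M.q0 := by
    rintro rfl
    exact hx hf.hom.1
  obtain ⟨a, b, y, z, hab, ha, hb⟩ := hM x' hx'
  exact ⟨a, b, f y, f z, hab, hf.hom.2 _ _ _ ha, hf.hom.2 _ _ _ hb⟩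

lemma isHom_of_comp (hf : IsQuotient M N f) {g : N.Q → Z.Q} (hg : M.IsHom Z (g ∘ f)) :
    N.IsHom Z g := by
  refine ⟨(congrArg g hf.hom.1).symm.trans hg.1, fun x a y h ↦ ?_⟩
  obtain ⟨x', y', h', rfl, rfl⟩ := hf.lift_edge x a y h
  exact hg.2 _ _ _ h'

lemma exists_isHom_comp_eq (hf : IsQuotient M N f) {g : M.Q → Z.Q} (hg : M.IsHom Z g)
    (h : g.FactorsThrough f) : ∃ k, N.IsHom Z k ∧ k ∘ f = g := by
  have : Nonempty Z.Q := ⟨Z.q0⟩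
  obtain ⟨k, rfl⟩ := (factorsThrough_iff g).1 h
  exact ⟨k, hf.isHom_of_comp hg, rfl⟩

end IsQuotient

lemma isQuotient_equiv {φ : M.Q ≃ N.Q} (h : M.IsHom N φ) (h' : N.IsHom M φ.symm) :
    IsQuotient M N φ :=
  ⟨h, φ.surjective, fun x a y hxy ↦ ⟨φ.symm x, φ.symm y, h'.2 _ _ _ hxy, by simp, by simp⟩⟩

lemma IsIdentification.exists_isQuotient {p q : M.Q} (h : M.IsIdentification p q N) :
    ∃ f, IsQuotient M N f ∧ f p = f q ∧ (collisionSet f).Finite ∧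
      ∀ (Z : Autom A) (g : M.Q → Z.Q), M.IsHom Z g → g p = g q → ∃ k, N.IsHom Z k ∧ k ∘ f = g := by
  obtain ⟨f, hsurj, hq0, hker, hE⟩ := h
  have hf : IsQuotient M N f := by
    refine ⟨⟨hq0, fun x a y hxy ↦ (hE _).2 ⟨_, hxy, rfl⟩⟩, hsurj, fun x a y hxy ↦ ?_⟩
    obtain ⟨⟨x', b, y'⟩, he, heq⟩ := (hE _).1 hxy
    obtain ⟨rfl, rfl, rfl⟩ : x = f x' ∧ a = b ∧ y = f y' := by simpa using heq
    exact ⟨x', y', he, rfl, rfl⟩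
  refine ⟨f, hf, (hker p q).2 (by simp), (Set.toFinite {p, q}).subset ?_,
    fun Z g hg hpq ↦ hf.exists_isHom_comp_eq hg fun x y hxy ↦ ?_⟩
  · rintro x ⟨y, hne, hy⟩
    have := (hker y x).1 hy
    grind
  · rcases (hker x y).1 hxy with rfl | ⟨rfl, rfl⟩ | ⟨rfl, rfl⟩
    exacts [rfl, hpq, hpq.symm]

lemma exists_isIdentification (M : Autom A) (p q : M.Q) : ∃ N, M.IsIdentification p q N := by
  let s : Setoid M.Q :=
    { r := fun x y ↦ x = y ∨ (x = p ∧ y = q) ∨ (x = q ∧ y = p)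
      iseqv := ⟨fun _ ↦ .inl rfl, by grind, by grind⟩ }
  let N : Autom A :=
    { Q := Quotient s
      q0 := ⟦M.q0⟧
      E := {e | ∃ e' ∈ M.E, e = (⟦e'.1⟧, e'.2.1, ⟦e'.2.2⟧)} }
  exact ⟨N, Quotient.mk s, Quotient.mk_surjective, rfl, fun _ _ ↦ Quotient.eq, fun _ ↦ Iff.rfl⟩

end Quotients

section Foldings

/-- `f` exhibits `N` as obtained from `M` by finitely many type 1 reductions, described by the
universal property with respect to deterministic automata. -/
structure IsFolding (M N : Autom A) (f : M.Q → N.Q) : Prop extends IsQuotient M N f where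
  desc : ∀ (Z : Autom A) (g : M.Q → Z.Q), Z.Deterministic → M.IsHom Z g →
    ∃ k, N.IsHom Z k ∧ k ∘ f = g
  finite : (collisionSet f).Finite

lemma isFolding_equiv {φ : M.Q ≃ N.Q} (h : M.IsHom N φ) (h' : N.IsHom M φ.symm) :
    IsFolding M N φ where
  toIsQuotient := isQuotient_equiv h h'
  desc _ g _ hg := ⟨g ∘ φ.symm, hg.comp h', by ext x; simp⟩
  finite := by simp [collisionSet_eq_empty φ.injective]

lemma IsFolding.comp {f : M.Q → N.Q} {g : N.Q → Z.Q} (hg : IsFolding N Z g)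
    (hf : IsFolding M N f) : IsFolding M Z (g ∘ f) where
  toIsQuotient := hg.toIsQuotient.comp hf.toIsQuotient
  desc Y h hY hh := by
    obtain ⟨k, hk, rfl⟩ := hf.desc Y h hY hh
    obtain ⟨l, hl, rfl⟩ := hg.desc Y k hY hk
    exact ⟨l, hl, rfl⟩
  finite := finite_collisionSet_comp hf.finite hg.finite

lemma Red1.exists_isFolding (h : Red1 M N) : ∃ f, IsFolding M N f := by
  obtain ⟨p, q, r, a, -, hp, hq, hN⟩ := h
  obtain ⟨f, hf, -, hfin, hdesc⟩ := hN.exists_isQuotient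
  exact ⟨f, hf, fun Z g hZ hg ↦
    hdesc Z g hg (hZ _ _ _ _ (hg.2 _ _ _ hp) (hg.2 _ _ _ hq)), hfin⟩

lemma exists_isFolding_of_reflTransGen (h : Relation.ReflTransGen Red1 M N) :
    ∃ f, IsFolding M N f := by
  induction h with
  | refl => exact ⟨_, isFolding_equiv (φ := .refl _) (isHom_id M) (isHom_id M)⟩
  | tail _ hstep ih =>
    obtain ⟨f, hf⟩ := ih
    obtain ⟨g, hg⟩ := hstep.exists_isFolding
    exact ⟨g ∘ f, hg.comp hf⟩

/-- Otherwise the two transitions leaving the deleted state `q` would include a loop, all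
transitions at `q` would be loops, and `q` would not be accessible. -/
lemma HasMinDegTwo.not_red2 (hdeg : M.HasMinDegTwo) (hacc : M.Accessible) : ¬ Red2 M N := by
  rintro ⟨p, q, a, hq0, -, -, hedges, -⟩
  obtain ⟨b, c, x, y, hbc, hb, hc⟩ := hdeg q hq0
  have hpq : p = q := by
    have hb' := hedges _ hb (.inl rfl)
    have hc' := hedges _ hc (.inl rfl)
    grind
  obtain ⟨u, hu⟩ := hacc q
  rcases u.eq_nil_or_concat' with rfl | ⟨u, d, rfl⟩
  · exact hq0 (path_nil_iff.1 hu).symm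
  have hloop : ∀ {w z}, M.Path z w q → z = q := by
    intro w z h
    induction w generalizing z with
    | nil => exact path_nil_iff.1 h
    | cons e w ih =>
      obtain ⟨z', he, hw⟩ := path_cons_iff.1 h
      have := hedges _ he (.inr (ih hw))
      grind
  exact hq0 (hloop hu).symm

lemma ReductionOf.exists_isFolding (h : ReductionOf M N) (hacc : M.Accessible)
    (hdeg : M.HasMinDegTwo) : N.Deterministic ∧ ∃ f, IsFolding M N f := by
  obtain ⟨M₁, h1, hdet, h2, -⟩ := h
  obtain ⟨f, hf⟩ := exists_isFolding_of_reflTransGen h1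
  rcases Relation.ReflTransGen.cases_head h2 with rfl | ⟨M₂, hred, -⟩
  · exact ⟨hdet, f, hf⟩
  · exact absurd hred ((hf.hasMinDegTwo hdeg).not_red2 (hf.accessible hacc))

lemma exists_reflTransGen_red1_deterministic {g : M.Q → Z.Q} (hZ : Z.Deterministic)
    (hg : M.IsHom Z g) (hfin : (collisionSet g).Finite) :
    ∃ N, Relation.ReflTransGen Red1 M N ∧ N.Deterministic := by
  induction hn : (collisionSet g).ncard using Nat.strong_induction_on generalizing M with
  | _ n ih =>
    by_cases hM : M.Deterministic
    · exact ⟨M, .refl, hM⟩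
    obtain ⟨r, a, p, q, hp, hq, hpq⟩ : ∃ r a p q, (r, a, p) ∈ M.E ∧ (r, a, q) ∈ M.E ∧ p ≠ q := by
      unfold Deterministic at hM
      push Not at hM
      exact hM
    obtain ⟨M₁, hid⟩ := M.exists_isIdentification p q
    have hred : Red1 M M₁ := ⟨p, q, r, a, hpq, hp, hq, hid⟩
    obtain ⟨f, hf, hfpq, -, hdesc⟩ := hid.exists_isQuotient
    obtain ⟨k, hk, rfl⟩ := hdesc Z g hg (hZ _ _ _ _ (hg.2 _ _ _ hp) (hg.2 _ _ _ hq))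
    have hlt := ncard_collisionSet_lt hfin hf.surj hpq hfpq
    have hkfin := finite_collisionSet_of_comp hfin (by simp [hf.surj.range_eq])
    obtain ⟨N, hN, hdet⟩ := ih _ (hn ▸ hlt) hk hkfin rfl
    exact ⟨N, .head hred hN, hdet⟩

lemma exists_reductionOf {g : M.Q → Z.Q} (hZ : Z.Deterministic) (hg : M.IsHom Z g)
    (hfin : (collisionSet g).Finite) (hacc : M.Accessible) (hdeg : M.HasMinDegTwo) :
    ∃ N, ReductionOf M N := by
  obtain ⟨N, hN, hdet⟩ := exists_reflTransGen_red1_deterministic hZ hg hfin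
  obtain ⟨f, hf⟩ := exists_isFolding_of_reflTransGen hN
  exact ⟨N, N, hN, hdet, .refl, fun _ ↦ (hf.hasMinDegTwo hdeg).not_red2 (hf.accessible hacc)⟩

end Foldings

section Gluings

/-- `φ` exhibits `X` as `M` with a path labeled `w` freely attached from `p` to `q`. This treats
on the same footing an identification (`w = []`) and an expansion (`w ≠ []`). -/
structure IsGluing (M : Autom A) (p : M.Q) (w : List (Ltr A)) (q : M.Q) (X : Autom A)
    (φ : M.Q → X.Q) : Prop where
  hom : M.IsHom X φ
  path : X.Path (φ p) w (φ q)
  dual : X.Dual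
  deg : X.HasMinDegTwo
  cover : ∀ x, x ∈ Set.range φ ∨ ∃ u v, w = u ++ v ∧ v ≠ [] ∧ X.Path (φ p) u x
  cofinite : (Set.range φ)ᶜ.Finite
  finite : (collisionSet φ).Finite
  desc : ∀ (Z : Autom A) (χ : M.Q → Z.Q), Z.Dual → M.IsHom Z χ → Z.Path (χ p) w (χ q) →
    ∃ k, X.IsHom Z k ∧ k ∘ φ = χ

lemma IsGluing.accessible {p q : M.Q} {w : List (Ltr A)} {φ : M.Q → N.Q}
    (h : IsGluing M p w q N φ) (hM : M.Accessible) : N.Accessible := by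
  have hφ : ∀ m, ∃ u, N.Path N.q0 u (φ m) := fun m ↦ by
    obtain ⟨u, hu⟩ := hM m
    exact ⟨u, h.hom.1 ▸ hu.map h.hom⟩
  intro x
  rcases h.cover x with ⟨m, rfl⟩ | ⟨u, -, -, -, hu⟩
  · exact hφ m
  · obtain ⟨v, hv⟩ := hφ p
    exact ⟨v ++ u, hv.append hu⟩

lemma IsIdentification.exists_isGluing {p q : M.Q} (h : M.IsIdentification p q N)
    (hdual : M.Dual) (hdeg : M.HasMinDegTwo) : ∃ φ, IsGluing M p [] q N φ := by
  obtain ⟨φ, hφ, hpq, hfin, hdesc⟩ := h.exists_isQuotient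
  exact ⟨φ, {
    hom := hφ.hom
    path := path_nil_iff.2 hpq
    dual := hφ.dual hdual
    deg := hφ.hasMinDegTwo hdeg
    cover := fun x ↦ .inl (hφ.surj x)
    cofinite := by simp [hφ.surj.range_eq]
    finite := hfin
    desc := fun Z χ _ hχ hpath ↦ hdesc Z χ hχ (path_nil_iff.1 hpath) }⟩

/-- The data of an expansion: the embedding `φ` of `M` and the states `c` of the new path. -/
structure IsExpansionVia (M : Autom A) (p : M.Q) (w : List (Ltr A)) (q : M.Q) (N : Autom A)
    (φ : M.Q → N.Q) (c : Fin (w.length + 1) → N.Q) : Prop where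
  injective : Injective φ
  map_q0 : φ M.q0 = N.q0
  start : c 0 = φ p
  finish : c (Fin.last w.length) = φ q
  inner_notMem_range : ∀ i : Fin (w.length + 1), 0 < (i : ℕ) → (i : ℕ) < w.length →
    c i ∉ Set.range φ
  inner_injective : ∀ i j : Fin (w.length + 1), 0 < (i : ℕ) → (i : ℕ) < w.length →
    c i = c j → i = j
  cover : ∀ x, (∃ y, φ y = x) ∨ ∃ i, c i = x
  edge_iff : ∀ e : N.Q × Ltr A × N.Q, e ∈ N.E ↔
    ((∃ e' ∈ M.E, e = (φ e'.1, e'.2.1, φ e'.2.2)) ∨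
      ∃ i : Fin w.length,
        e = (c i.castSucc, w.get i, c i.succ) ∨
        e = (c i.succ, Ltr.inv (w.get i), c i.castSucc))

lemma isExpansion_iff {p q : M.Q} {w : List (Ltr A)} :
    M.IsExpansion p w q N ↔ w ≠ [] ∧ ∃ φ c, IsExpansionVia M p w q N φ c :=
  and_congr_right fun _ ↦ exists_congr fun _ ↦ exists_congr fun _ ↦
    ⟨fun ⟨h₁, h₂, h₃, h₄, h₅, h₆, h₇, h₈⟩ ↦ ⟨h₁, h₂, h₃, h₄, h₅, h₆, h₇, h₈⟩,
      fun ⟨h₁, h₂, h₃, h₄, h₅, h₆, h₇, h₈⟩ ↦ ⟨h₁, h₂, h₃, h₄, h₅, h₆, h₇, h₈⟩⟩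

lemma exists_path_vertices {p q : M.Q} {w : List (Ltr A)} (h : M.Path p w q) :
    ∃ d : Fin (w.length + 1) → M.Q, d 0 = p ∧ d (Fin.last _) = q ∧
      ∀ i : Fin w.length, (d i.castSucc, w.get i, d i.succ) ∈ M.E := by
  induction w generalizing p with
  | nil => exact ⟨fun _ ↦ p, rfl, path_nil_iff.1 h, fun i ↦ i.elim0⟩
  | cons a w ih =>
    obtain ⟨r, ha, hw⟩ := path_cons_iff.1 h
    obtain ⟨d, hd0, hdlast, hd⟩ := ih hw
    refine ⟨Fin.cons p d, rfl, hdlast, fun i ↦ ?_⟩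
    cases i using Fin.cases with
    | zero => simpa [hd0] using ha
    | succ i => exact hd i

namespace IsExpansionVia

variable {p q : M.Q} {w : List (Ltr A)} {φ : M.Q → N.Q} {c : Fin (w.length + 1) → N.Q}

lemma hom (h : IsExpansionVia M p w q N φ c) : M.IsHom N φ :=
  ⟨h.map_q0, fun _ _ _ he ↦ (h.edge_iff _).2 (.inl ⟨_, he, rfl⟩)⟩

lemma edge (h : IsExpansionVia M p w q N φ c) (i : Fin w.length) :
    (c i.castSucc, w.get i, c i.succ) ∈ N.E :=
  (h.edge_iff _).2 (.inr ⟨i, .inl rfl⟩)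

lemma inv_edge (h : IsExpansionVia M p w q N φ c) (i : Fin w.length) :
    (c i.succ, (w.get i).inv, c i.castSucc) ∈ N.E :=
  (h.edge_iff _).2 (.inr ⟨i, .inr rfl⟩)

lemma dual (h : IsExpansionVia M p w q N φ c) (hM : M.Dual) : N.Dual := by
  apply dual_of_forall_inv_mem
  intro x a y hxy
  rcases (h.edge_iff _).1 hxy with ⟨e, he, heq⟩ | ⟨i, heq | heq⟩ <;> cases heq
  · exact h.hom.2 _ _ _ ((hM _ _ _).1 he)
  · exact h.inv_edge i
  · simpa using h.edge i

lemma path_take (h : IsExpansionVia M p w q N φ c) (i : Fin (w.length + 1)) :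
    N.Path (φ p) (w.take i) (c i) := by
  induction i using Fin.induction with
  | zero => simp [h.start]
  | succ i ih =>
    have hi : w.take (i.succ : ℕ) = w.take (i.castSucc : ℕ) ++ [w.get i] := by simp
    rw [hi]
    exact ih.append (path_singleton_iff.2 (h.edge i))

lemma path (h : IsExpansionVia M p w q N φ c) : N.Path (φ p) w (φ q) := by
  simpa [h.finish] using h.path_take (Fin.last _)

lemma exists_inner (h : IsExpansionVia M p w q N φ c) {x : N.Q} (hx : x ∉ Set.range φ) :
    ∃ i, c i = x ∧ 0 < (i : ℕ) ∧ (i : ℕ) < w.length := by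
  obtain ⟨i, rfl⟩ := (h.cover x).resolve_left hx
  refine ⟨i, rfl, Nat.pos_of_ne_zero fun hi ↦ hx ?_, lt_of_le_of_ne i.is_le fun hi ↦ hx ?_⟩
  · obtain rfl : i = 0 := Fin.ext hi
    exact ⟨p, h.start.symm⟩
  · obtain rfl : i = Fin.last _ := Fin.ext hi
    exact ⟨q, h.finish.symm⟩

lemma hasMinDegTwo (h : IsExpansionVia M p w q N φ c) (hM : M.HasMinDegTwo)
    (hw : IsReducedWord w) : N.HasMinDegTwo := by
  intro x hx
  by_cases hxr : x ∈ Set.range φ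
  · obtain ⟨m, rfl⟩ := hxr
    have hm : m ≠ M.q0 := by
      rintro rfl
      exact hx h.map_q0
    obtain ⟨a, b, y, z, hab, ha, hb⟩ := hM m hm
    exact ⟨a, b, φ y, φ z, hab, h.hom.2 _ _ _ ha, h.hom.2 _ _ _ hb⟩
  · obtain ⟨⟨i, hi⟩, rfl, hpos, hlt⟩ := h.exists_inner hxr
    obtain ⟨i, rfl⟩ := Nat.exists_eq_succ_of_ne_zero hpos.ne'
    dsimp only at hlt
    have hsplit : w = w.take i ++ w[i] :: w[i + 1] :: w.drop (i + 2) := by simp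
    have hred : IsReducedWord (w[i] :: w[i + 1] :: w.drop (i + 2)) :=
      IsReducedWord.right (hsplit ▸ hw)
    exact ⟨_, _, _, _, (isReducedWord_cons_cons.1 hred).1.symm, h.inv_edge ⟨i, by omega⟩,
      h.edge ⟨i + 1, hlt⟩⟩

lemma exists_extension (h : IsExpansionVia M p w q N φ c) {S : Type*} {χ : M.Q → S}
    {d : Fin (w.length + 1) → S} (hstart : d 0 = χ p) (hfinish : d (Fin.last _) = χ q) :
    ∃ k : N.Q → S, (∀ m, k (φ m) = χ m) ∧ ∀ i, k (c i) = d i := by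
  have hex : ∀ x, ∃ z, (∀ m, φ m = x → χ m = z) ∧ ∀ i, c i = x → d i = z := by
    intro x
    by_cases hx : x ∈ Set.range φ
    · obtain ⟨m, rfl⟩ := hx
      refine ⟨χ m, fun m' hm ↦ congrArg χ (h.injective hm), fun i hi ↦ ?_⟩
      rcases eq_or_ne i 0 with rfl | hi0
      · rw [hstart, h.injective (h.start.symm.trans hi)]
      rcases eq_or_ne i (Fin.last _) with rfl | hil
      · rw [hfinish, h.injective (h.finish.symm.trans hi)]
      · exact absurd ⟨m, hi.symm⟩
          (h.inner_notMem_range i (Fin.pos_of_ne_zero hi0) (Fin.val_lt_last hil))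
    · obtain ⟨i, rfl, hpos, hlt⟩ := h.exists_inner hx
      exact ⟨d i, fun m hm ↦ absurd ⟨m, hm⟩ hx,
        fun j hj ↦ congrArg d (h.inner_injective i j hpos hlt hj.symm).symm⟩
  choose k hk hk' using hex
  exact ⟨k, fun m ↦ (hk _ m rfl).symm, fun i ↦ (hk' _ i rfl).symm⟩

lemma exists_desc (h : IsExpansionVia M p w q N φ c) (hZ : Z.Dual) {χ : M.Q → Z.Q}
    (hχ : M.IsHom Z χ) (hpath : Z.Path (χ p) w (χ q)) : ∃ k, N.IsHom Z k ∧ k ∘ φ = χ := by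
  obtain ⟨d, hd0, hdlast, hd⟩ := exists_path_vertices hpath
  obtain ⟨k, hkφ, hkc⟩ := h.exists_extension hd0 hdlast
  refine ⟨k, ⟨by rw [← h.map_q0, hkφ, hχ.1], fun x a y hxy ↦ ?_⟩, funext hkφ⟩
  rcases (h.edge_iff _).1 hxy with ⟨e, he, heq⟩ | ⟨i, heq | heq⟩ <;> cases heq
  · simpa only [hkφ] using hχ.2 _ _ _ he
  · simpa only [hkc] using hd i
  · simpa only [hkc] using (hZ _ _ _).1 (hd i)

lemma isGluing (h : IsExpansionVia M p w q N φ c) (hdual : M.Dual) (hdeg : M.HasMinDegTwo)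
    (hw : IsReducedWord w) : IsGluing M p w q N φ where
  hom := h.hom
  path := h.path
  dual := h.dual hdual
  deg := h.hasMinDegTwo hdeg hw
  cover x := by
    by_cases hx : x ∈ Set.range φ
    · exact .inl hx
    · obtain ⟨i, rfl, -, hlt⟩ := h.exists_inner hx
      exact .inr ⟨w.take i, w.drop i, (List.take_append_drop _ _).symm, by simpa using hlt,
        h.path_take i⟩
  cofinite := (Set.finite_range c).subset fun x hx ↦
    let ⟨i, hi, _⟩ := h.exists_inner hx; ⟨i, hi⟩
  finite := by simp [collisionSet_eq_empty h.injective]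
  desc _ _ hZ hχ hpath := h.exists_desc hZ hχ hpath

end IsExpansionVia

lemma IsExpansion.exists_isGluing {p q : M.Q} {w : List (Ltr A)} (h : M.IsExpansion p w q N)
    (hdual : M.Dual) (hdeg : M.HasMinDegTwo) (hw : IsReducedWord w) :
    ∃ φ, IsGluing M p w q N φ :=
  let ⟨_, φ, _, hφ⟩ := isExpansion_iff.1 h
  ⟨φ, hφ.isGluing hdual hdeg hw⟩

lemma exists_isExpansion (M : Autom A) (p : M.Q) {w : List (Ltr A)} (q : M.Q) (hw : w ≠ []) :
    ∃ N, M.IsExpansion p w q N := by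
  let I := {i : Fin (w.length + 1) // 0 < (i : ℕ) ∧ (i : ℕ) < w.length}
  let c : Fin (w.length + 1) → M.Q ⊕ I := fun i ↦
    if hi : 0 < (i : ℕ) ∧ (i : ℕ) < w.length then .inr ⟨i, hi⟩ else .inl (if i = 0 then p else q)
  let N : Autom A :=
    { Q := M.Q ⊕ I
      q0 := .inl M.q0
      E := {e | (∃ e' ∈ M.E, e = (.inl e'.1, e'.2.1, .inl e'.2.2)) ∨
        ∃ i : Fin w.length,
          e = (c i.castSucc, w.get i, c i.succ) ∨
          e = (c i.succ, Ltr.inv (w.get i), c i.castSucc)} }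
  have hlast : Fin.last w.length ≠ 0 := by
    simpa [Fin.ext_iff] using hw
  have hinner : ∀ (i : Fin (w.length + 1)) (hi : 0 < (i : ℕ) ∧ (i : ℕ) < w.length),
      c i = .inr ⟨i, hi⟩ := fun i hi ↦ dif_pos hi
  refine ⟨N, isExpansion_iff.2 ⟨hw, Sum.inl, c, Sum.inl_injective, rfl, by simp [c],
    by simp [c, hlast], fun i h0 hl ↦ by simp [hinner i ⟨h0, hl⟩], fun i j h0 hl hij ↦ ?_, ?_,
    fun _ ↦ Iff.rfl⟩⟩
  · rw [hinner i ⟨h0, hl⟩] at hij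
    by_cases hj : 0 < (j : ℕ) ∧ (j : ℕ) < w.length
    swap
    · exact absurd (hij.trans (dif_neg hj)) Sum.inr_ne_inl
    rw [hinner j hj] at hij
    exact congrArg Subtype.val (Sum.inr_injective hij)
  · rintro (m | ⟨i, hi⟩)
    exacts [.inl ⟨m, rfl⟩, .inr ⟨i, hinner i hi⟩]

lemma exists_isGluing (hdual : M.Dual) (hdeg : M.HasMinDegTwo) (p : M.Q) {w : List (Ltr A)}
    (q : M.Q) (hw : IsReducedWord w) : ∃ N φ, IsGluing M p w q N φ := by
  rcases eq_or_ne w [] with rfl | hne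
  · obtain ⟨N, hN⟩ := M.exists_isIdentification p q
    exact ⟨N, hN.exists_isGluing hdual hdeg⟩
  · obtain ⟨N, hN⟩ := M.exists_isExpansion p q hne
    exact ⟨N, hN.exists_isGluing hdual hdeg hw⟩

end Gluings

section UniversalExtensions

/-- A condition on maps out of the state set of `M`, such as the existence in the target of a path
between the images of two states. -/
abbrev Constraint (M : Autom A) : Type 1 := ∀ Z : Autom A, (M.Q → Z.Q) → Prop

/-- The condition that `w` labels a path from the image of `p` to the image of `q`. -/
def joins (p : M.Q) (w : List (Ltr A)) (q : M.Q) : M.Constraint :=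
  fun Z χ ↦ Z.Path (χ p) w (χ q)

/-- `f : M → N` is initial among the homomorphisms from `M` to folded automata satisfying `C`. -/
structure IsUniversal (M : Autom A) (C : M.Constraint) (N : Autom A) (f : M.Q → N.Q) : Prop where
  folded : N.IsFolded
  acc : N.Accessible
  hom : M.IsHom N f
  holds : C N f
  desc : ∀ (Z : Autom A) (χ : M.Q → Z.Q), Z.IsFolded → M.IsHom Z χ → C Z χ →
    ∃ g, N.IsHom Z g ∧ g ∘ f = χ

namespace IsUniversal

variable {C D : M.Constraint} {f : M.Q → N.Q}

lemma isomorphic (h : IsUniversal M C N f) {N' : Autom A} {f' : M.Q → N'.Q}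
    (h' : IsUniversal M C N' f') : N.Isomorphic N' := by
  obtain ⟨g, hg, -⟩ := h.desc N' f' h'.folded h'.hom h'.holds
  obtain ⟨g', hg', -⟩ := h'.desc N f h.folded h.hom h.holds
  exact hg.isomorphic hg' (hg.comp_eq_id hg' h.acc h.folded.det)
    (hg'.comp_eq_id hg h'.acc h'.folded.det)

lemma congr (h : IsUniversal M C N f)
    (hCD : ∀ (Z : Autom A) (χ : M.Q → Z.Q), Z.IsFolded → M.IsHom Z χ → (C Z χ ↔ D Z χ)) :
    IsUniversal M D N f where
  folded := h.folded
  acc := h.acc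
  hom := h.hom
  holds := (hCD N f h.folded h.hom).1 h.holds
  desc Z χ hZ hχ hD := h.desc Z χ hZ hχ ((hCD Z χ hZ hχ).2 hD)

lemma comp (hf : IsUniversal M C N f) {E : N.Constraint} {g : N.Q → Z.Q}
    (hg : IsUniversal N E Z g) :
    IsUniversal M (fun Y χ ↦ ∃ k, N.IsHom Y k ∧ k ∘ f = χ ∧ E Y k) Z (g ∘ f) where
  folded := hg.folded
  acc := hg.acc
  hom := hg.hom.comp hf.hom
  holds := ⟨g, hg.hom, rfl, hg.holds⟩
  desc Y χ hY hχ := by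
    rintro ⟨k, hk, rfl, hE⟩
    obtain ⟨l, hl, rfl⟩ := hg.desc Y k hY hk hE
    exact ⟨l, hl, rfl⟩

lemma exists_factor (hN : IsUniversal M C N f) {N' : Autom A} {f' : M.Q → N'.Q}
    (hN' : IsUniversal M D N' f') (hD : D N f) :
    ∃ h, h ∘ f' = f ∧ IsUniversal N' (fun Z χ ↦ C Z (χ ∘ f')) N h := by
  obtain ⟨h, hh, hhf⟩ := hN'.desc N f hN.folded hN.hom hD
  refine ⟨h, hhf, hN.folded, hN.acc, hh, hhf ▸ hN.holds, fun Z χ hZ hχ hC ↦ ?_⟩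
  obtain ⟨g, hg, -⟩ := hN.desc Z (χ ∘ f') hZ (hχ.comp hN'.hom) hC
  exact ⟨g, hg, (hg.comp hh).unique hχ hN'.acc hZ.det⟩

lemma precomp (hN : IsUniversal M C N f) {L : Autom A} {i : L.Q → M.Q} {j : M.Q → L.Q}
    (hi : L.IsHom M i) (hj : M.IsHom L j) (hij : i ∘ j = id) (hji : j ∘ i = id) :
    IsUniversal L (fun Z χ ↦ C Z (χ ∘ j)) N (f ∘ i) where
  folded := hN.folded
  acc := hN.acc
  hom := hN.hom.comp hi
  holds := by simpa only [comp_assoc, hij, comp_id] using hN.holds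
  desc Z χ hZ hχ hC := by
    obtain ⟨g, hg, hgf⟩ := hN.desc Z (χ ∘ j) hZ (hχ.comp hj) hC
    exact ⟨g, hg, by rw [← comp_assoc, hgf, comp_assoc, hji, comp_id]⟩

end IsUniversal

/-- `f` exhibits `N` as the result of freely attaching to `M` a path labeled `w` from `p` to `q`
and reducing: the common form of i-steps (`w = []`) and expansions (`w ≠ []`). -/
structure IsFreeJoin (M : Autom A) (p : M.Q) (w : List (Ltr A)) (q : M.Q) (N : Autom A)
    (f : M.Q → N.Q) : Prop extends IsUniversal M (joins p w q) N f where
  deg : N.HasMinDegTwo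
  cover : ∀ x, x ∈ Set.range f ∨ ∃ u v, w = u ++ v ∧ v ≠ [] ∧ N.Path (f p) u x
  cofinite : (Set.range f)ᶜ.Finite
  finite : (collisionSet f).Finite

lemma IsFreeJoin.isCore {p q : M.Q} {w : List (Ltr A)} {f : M.Q → N.Q}
    (h : IsFreeJoin M p w q N f) : N.IsCore where
  toIsFolded := h.folded
  acc := h.acc
  deg := h.deg

namespace IsGluing

variable {X : Autom A} {p q : M.Q} {w : List (Ltr A)} {φ : M.Q → X.Q}

lemma isFreeJoin (hX : IsGluing M p w q X φ) (hM : M.Accessible) {g : X.Q → N.Q}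
    (hg : IsFolding X N g) (hN : N.Deterministic) : IsFreeJoin M p w q N (g ∘ φ) where
  folded := ⟨hN, hg.dual hX.dual⟩
  acc := hg.accessible (hX.accessible hM)
  hom := hg.hom.comp hX.hom
  holds := hX.path.map hg.hom
  desc Z χ hZ hχ hpath := by
    obtain ⟨k, hk, rfl⟩ := hX.desc Z χ hZ.dual hχ hpath
    obtain ⟨l, hl, rfl⟩ := hg.desc Z k hZ.det hk
    exact ⟨l, hl, rfl⟩
  deg := hg.hasMinDegTwo hX.deg
  cover x := by
    obtain ⟨x, rfl⟩ := hg.surj x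
    rcases hX.cover x with ⟨m, rfl⟩ | ⟨u, v, huv, hv, hu⟩
    exacts [.inl ⟨m, rfl⟩, .inr ⟨u, v, huv, hv, hu.map hg.hom⟩]
  cofinite := (hX.cofinite.image g).subset fun x hx ↦ by
    obtain ⟨x, rfl⟩ := hg.surj x
    refine ⟨x, ?_, rfl⟩
    rintro ⟨m, rfl⟩
    exact hx ⟨m, rfl⟩
  finite := finite_collisionSet_comp hX.finite hg.finite

lemma exists_isFreeJoin_of_reductionOf (hX : IsGluing M p w q X φ) (hM : M.Accessible)
    {Y : Autom A} (hY : ReductionOf X Y) (hYN : Y.Isomorphic N) :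
    ∃ f, IsFreeJoin M p w q N f := by
  obtain ⟨hdet, g, hg⟩ := hY.exists_isFolding (hX.accessible hM) hX.deg
  obtain ⟨e, he, he'⟩ := hYN
  have hN : N.Deterministic := fun x a y y' h h' ↦
    e.symm.injective (hdet _ _ _ _ (he'.2 _ _ _ h) (he'.2 _ _ _ h'))
  exact ⟨_, hX.isFreeJoin hM ((isFolding_equiv he he').comp hg) hN⟩

lemma exists_reductionOf (hX : IsGluing M p w q X φ) (hM : M.Accessible) (hZ : Z.IsFolded)
    {χ : M.Q → Z.Q} (hχ : M.IsHom Z χ) (hfin : (collisionSet χ).Finite)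
    (hpath : Z.Path (χ p) w (χ q)) : ∃ Y f, ReductionOf X Y ∧ IsFreeJoin M p w q Y f := by
  obtain ⟨k, hk, rfl⟩ := hX.desc Z χ hZ.dual hχ hpath
  obtain ⟨Y, hY⟩ := Autom.exists_reductionOf hZ.det hk
    (finite_collisionSet_of_comp hfin hX.cofinite) (hX.accessible hM) hX.deg
  obtain ⟨f, hf⟩ := hX.exists_isFreeJoin_of_reductionOf hM hY (.refl Y)
  exact ⟨Y, f, hY, hf⟩

end IsGluing

lemma ExpStep.exists_isFreeJoin {p q : M.Q} {w : List (Ltr A)} (h : M.ExpStep p w q N)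
    (hM : M.IsCore) (hw : IsReducedWord w) : ∃ f, IsFreeJoin M p w q N f := by
  obtain ⟨X, Y, hX, hY, hYN⟩ := h
  obtain ⟨φ, hφ⟩ := hX.exists_isGluing hM.dual hM.deg hw
  exact hφ.exists_isFreeJoin_of_reductionOf hM.acc hY hYN

lemma IStep.exists_isFreeJoin {p q : M.Q} (h : M.IStep p q N) (hM : M.IsCore) :
    ∃ f, IsFreeJoin M p [] q N f := by
  obtain ⟨-, X, Y, hX, hY, hYN⟩ := h
  obtain ⟨φ, hφ⟩ := hX.exists_isGluing hM.dual hM.deg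
  exact hφ.exists_isFreeJoin_of_reductionOf hM.acc hY hYN

lemma exists_isFreeJoin (hM : M.IsCore) (hZ : Z.IsFolded) {χ : M.Q → Z.Q} (hχ : M.IsHom Z χ)
    (hfin : (collisionSet χ).Finite) {p q : M.Q} {w : List (Ltr A)} (hw : IsReducedWord w)
    (hpath : Z.Path (χ p) w (χ q)) : ∃ N f, IsFreeJoin M p w q N f := by
  obtain ⟨X, φ, hX⟩ := exists_isGluing hM.dual hM.deg p q hw
  obtain ⟨N, f, -, hf⟩ := hX.exists_reductionOf hM.acc hZ hχ hfin hpath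
  exact ⟨N, f, hf⟩

namespace IsUniversal

variable {p q : M.Q} {w : List (Ltr A)} {f : M.Q → N.Q}

lemma exists_reductionOf_isomorphic (h : IsUniversal M (joins p w q) N f) (hM : M.Accessible)
    (hfin : (collisionSet f).Finite) {X : Autom A} {φ : M.Q → X.Q} (hX : IsGluing M p w q X φ) :
    ∃ Y, ReductionOf X Y ∧ Y.Isomorphic N := by
  obtain ⟨Y, g, hY, hg⟩ := hX.exists_reductionOf hM h.folded h.hom hfin h.holds
  exact ⟨Y, hY, hg.toIsUniversal.isomorphic h⟩

lemma iStep (h : IsUniversal M (joins p [] q) N f) (hM : M.IsCore)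
    (hfin : (collisionSet f).Finite) (hpq : p ≠ q) : M.IStep p q N := by
  obtain ⟨X, hX⟩ := M.exists_isIdentification p q
  obtain ⟨φ, hφ⟩ := hX.exists_isGluing hM.dual hM.deg
  obtain ⟨Y, hY, hYN⟩ := h.exists_reductionOf_isomorphic hM.acc hfin hφ
  exact ⟨hpq, X, Y, hX, hY, hYN⟩

lemma expStep (h : IsUniversal M (joins p w q) N f) (hM : M.IsCore)
    (hfin : (collisionSet f).Finite) (hw : IsReducedWord w) (hne : w ≠ []) :
    M.ExpStep p w q N := by
  obtain ⟨X, hX⟩ := M.exists_isExpansion p q hne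
  obtain ⟨φ, hφ⟩ := hX.exists_isGluing hM.dual hM.deg hw
  obtain ⟨Y, hY, hYN⟩ := h.exists_reductionOf_isomorphic hM.acc hfin hφ
  exact ⟨X, Y, hX, hY, hYN⟩

end IsUniversal

end UniversalExtensions

section Embeddings

/-- The disjoint union of an automaton and an isolated state `none`. -/
def adjoinState (M : Autom A) : Autom A where
  Q := Option M.Q
  q0 := some M.q0
  E := {e | ∃ e' ∈ M.E, e = (some e'.1, e'.2.1, some e'.2.2)}

/-- The automaton obtained by adding the transition `(p, a, q)` and its inverse. -/
def adjoinEdge (M : Autom A) (p : M.Q) (a : Ltr A) (q : M.Q) : Autom A where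
  Q := M.Q
  q0 := M.q0
  E := M.E ∪ {(p, a, q), (q, a.inv, p)}

lemma isHom_adjoinState (M : Autom A) : M.IsHom M.adjoinState some :=
  ⟨rfl, fun _ _ _ h ↦ ⟨_, h, rfl⟩⟩

lemma IsFolded.adjoinState (hM : M.IsFolded) : M.adjoinState.IsFolded where
  det := by
    rintro _ _ _ _ ⟨⟨x, a, y⟩, h, ⟨⟩⟩ ⟨⟨x', a', y'⟩, h', ⟨⟩⟩
    exact congrArg some (hM.det _ _ _ _ h h')
  dual := by
    apply dual_of_forall_inv_mem
    rintro _ _ _ ⟨⟨x, a, y⟩, h, ⟨⟩⟩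
    exact M.isHom_adjoinState.2 _ _ _ ((hM.dual _ _ _).1 h)

lemma isHom_adjoinEdge (M : Autom A) (p : M.Q) (a : Ltr A) (q : M.Q) :
    M.IsHom (M.adjoinEdge p a q) id :=
  ⟨rfl, fun _ _ _ h ↦ .inl h⟩

lemma IsFolded.adjoinEdge (hM : M.IsFolded) {p q : M.Q} {a : Ltr A}
    (hp : ∀ y, (p, a, y) ∉ M.E) (hq : ∀ y, (q, a.inv, y) ∉ M.E) :
    (M.adjoinEdge p a q).IsFolded where
  det := by
    rintro x b y y' (h | h | h) (h' | h' | h')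
    · exact hM.det _ _ _ _ h h'
    · cases h'
      exact absurd h (hp _)
    · cases h'
      exact absurd h (hq _)
    · cases h
      exact absurd h' (hp _)
    · cases h
      cases h'
      rfl
    · exact absurd ((congrArg (·.2.1) h').symm.trans (congrArg (·.2.1) h)) a.inv_ne
    · cases h
      exact absurd h' (hq _)
    · exact absurd ((congrArg (·.2.1) h).symm.trans (congrArg (·.2.1) h')) a.inv_ne
    · cases h
      cases h'
      rfl
  dual := by
    apply dual_of_forall_inv_mem
    rintro x b y (h | h | h)
    · exact .inl ((hM.dual _ _ _).1 h)
    · cases h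
      exact .inr (.inr rfl)
    · cases h
      exact .inr (.inl (by rw [Ltr.inv_inv]; rfl))

lemma IsFolded.exists_leaf (hM : M.IsFolded) {p : M.Q} {a : Ltr A} (hp : ∀ y, (p, a, y) ∉ M.E) :
    ∃ (L : Autom A) (ι : M.Q → L.Q) (t : L.Q), L.IsFolded ∧ Injective ι ∧ M.IsHom L ι ∧
      (ι p, a, t) ∈ L.E ∧
      (∀ x b y, (ι x, b, y) ∈ L.E → (∃ y', (x, b, y') ∈ M.E) ∨ x = p ∧ b = a) ∧
      ∀ b y, (t, b, y) ∈ L.E → b = a.inv := by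
  refine ⟨M.adjoinState.adjoinEdge (some p) a none, some, none, ?_, Option.some_injective _,
    (isHom_adjoinEdge ..).comp M.isHom_adjoinState, .inr (.inl rfl), ?_, ?_⟩
  · apply hM.adjoinState.adjoinEdge
    · rintro _ ⟨⟨x, b, y⟩, h, ⟨⟩⟩
      exact hp _ h
    · rintro _ ⟨_, _, ⟨⟩⟩
  · rintro x b y (⟨⟨x', b', y'⟩, h, ⟨⟩⟩ | ⟨⟨⟩⟩ | ⟨⟨⟩⟩)
    exacts [.inl ⟨y', h⟩, .inr ⟨rfl, rfl⟩]
  · rintro b y (⟨_, _, ⟨⟩⟩ | ⟨⟨⟩⟩ | ⟨⟨⟩⟩)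
    rfl

/-- No transition leaving `p` carries the first letter of `w`. -/
def Unreadable (M : Autom A) (p : M.Q) (w : List (Ltr A)) : Prop :=
  ∀ a ∈ w.head?, ∀ y, (p, a, y) ∉ M.E

lemma unreadable_of_leaf {t : M.Q} {a : Ltr A} (ht : ∀ b y, (t, b, y) ∈ M.E → b = a.inv)
    {w : List (Ltr A)} (hw : IsReducedWord (a :: w)) : M.Unreadable t w := by
  intro b hb y hy
  obtain ⟨w', rfl⟩ := List.head?_eq_some_iff.1 hb
  exact (isReducedWord_cons_cons.1 hw).1 (ht b y hy)

/-- Attach the path letter by letter. If `w = a ⋯ a⁻¹` is to be attached at `p = q`, both ends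
share the new transition labeled `a` and the rest of `w` is a loop at its end. -/
theorem IsFolded.exists_injective_isHom_path (hM : M.IsFolded) {p q : M.Q} {w : List (Ltr A)}
    (hw : IsReducedWord w) (hne : w ≠ []) (hp : M.Unreadable p w)
    (hq : M.Unreadable q (wordInv w)) :
    ∃ (Z : Autom A) (ψ : M.Q → Z.Q), Z.IsFolded ∧ Injective ψ ∧ M.IsHom Z ψ ∧
      Z.Path (ψ p) w (ψ q) := by
  induction hn : w.length using Nat.strong_induction_on generalizing M w with
  | _ n ih =>
  match w with
  | [a] =>
    exact ⟨M.adjoinEdge p a q, id, hM.adjoinEdge (hp a rfl) (hq _ rfl), injective_id,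
      isHom_adjoinEdge .., path_singleton_iff.2 (.inr (.inl rfl))⟩
  | a :: b :: w =>
    obtain ⟨L, ι, t, hL, hιinj, hι, hpt, hold, hleaf⟩ := hM.exists_leaf (hp a rfl)
    by_cases hright : L.Unreadable (ι q) (wordInv (b :: w))
    · obtain ⟨Z, ψ, hZ, hψinj, hψ, hpath⟩ := ih _ (by simp [← hn]) hL
        (IsReducedWord.right (u := [a]) hw) (by simp) (unreadable_of_leaf hleaf hw) hright rfl
      exact ⟨Z, ψ ∘ ι, hZ, hψinj.comp hιinj, hψ.comp hι,
        path_cons_iff.2 ⟨ψ t, hψ.2 _ _ _ hpt, hpath⟩⟩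
    simp only [Unreadable, not_forall, not_not] at hright
    obtain ⟨c, hc, y, hcy⟩ := hright
    obtain ⟨rfl, rfl⟩ : q = p ∧ c = a := (hold q c y hcy).resolve_left fun ⟨y', hy'⟩ ↦
      hq c (by rw [wordInv_cons, List.head?_append, hc]; rfl) y' hy'
    obtain ⟨v, hv0, hbw, hcv, hcv'⟩ := hw.exists_eq_append_inv hc
    obtain ⟨Z, ψ, hZ, hψinj, hψ, hpath⟩ := ih _
      (by rw [← hn, hbw]; simp) hL (IsReducedWord.right (u := [c]) hcv) hv0
      (unreadable_of_leaf hleaf hcv) (unreadable_of_leaf hleaf hcv') rfl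
    have hpt' := hψ.2 _ _ _ hpt
    rw [hbw]
    exact ⟨Z, ψ ∘ ι, hZ, hψinj.comp hιinj, hψ.comp hι, path_cons_iff.2 ⟨ψ t, hpt',
      hpath.append (path_singleton_iff.2 ((hZ.dual _ _ _).1 hpt'))⟩⟩

end Embeddings

section Steps

variable {p q : M.Q} {w : List (Ltr A)} {f : M.Q → N.Q}

namespace IsUniversal

lemma reStep (h : IsUniversal M (joins p w q) N f) (hM : M.IsCore)
    (hfin : (collisionSet f).Finite) (hw : IsReducedWord w) (hne : w ≠ [])
    (hp : M.Unreadable p w) (hq : M.Unreadable q (wordInv w)) : M.REStep p w q N := by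
  obtain ⟨Z, ψ, hZ, hψinj, hψ, hpath⟩ := hM.exists_injective_isHom_path hw hne hp hq
  obtain ⟨g, -, rfl⟩ := h.desc Z ψ hZ hψ hpath
  exact ⟨h.expStep hM hfin hw hne, f, hψinj.of_comp, h.hom⟩

lemma joins_symm (h : IsUniversal M (joins p w q) N f) :
    IsUniversal M (joins q (wordInv w) p) N f :=
  h.congr fun _ _ hZ _ ↦ hZ.dual.path_wordInv_iff.symm

lemma exists_shorter (h : IsUniversal M (joins p w q) N f) (hw : IsReducedWord w)
    (hp : ¬ M.Unreadable p w) :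
    ∃ p' w', w'.length < w.length ∧ IsReducedWord w' ∧ IsUniversal M (joins p' w' q) N f := by
  simp only [Unreadable, not_forall, not_not] at hp
  obtain ⟨a, ha, y, hy⟩ := hp
  obtain ⟨w, rfl⟩ := List.head?_eq_some_iff.1 ha
  exact ⟨y, w, by simp, IsReducedWord.right (u := [a]) hw, h.congr fun Z χ hZ hχ ↦
    hZ.det.path_append_iff (u := [a]) (path_singleton_iff.2 (hχ.2 _ _ _ hy))⟩

/-- The letters of `w` that can be read in `M` from either end are removed at no cost. -/
theorem exists_isHom_or_stepCost (h : IsUniversal M (joins p w q) N f) (hM : M.IsCore)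
    (hfin : (collisionSet f).Finite) (hw : IsReducedWord w) :
    (∃ g, N.IsHom M g) ∨ ∃ c ≤ w.length, StepCost M N c := by
  induction hn : w.length using Nat.strong_induction_on generalizing p w q with
  | _ n ih =>
  have hshort : ∀ {p q w'}, IsUniversal M (joins p w' q) N f → IsReducedWord w' →
      w'.length = n → ¬ M.Unreadable p w' →
      (∃ g, N.IsHom M g) ∨ ∃ c ≤ n, StepCost M N c := by
    intro p q w' h hw' hw'n hp
    obtain ⟨p', v, hv, hvred, hv'⟩ := h.exists_shorter hw' hp
    exact (ih _ (hw'n ▸ hv) hv' hvred rfl).imp_right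
      fun ⟨c, hc, hstep⟩ ↦ ⟨c, hc.trans (hw'n ▸ hv.le), hstep⟩
  by_cases hp : M.Unreadable p w
  swap
  · exact hshort h hw hn hp
  by_cases hq : M.Unreadable q (wordInv w)
  swap
  · exact hshort h.joins_symm hw.wordInv (by simpa using hn) hq
  rcases eq_or_ne w [] with rfl | hne
  swap
  · exact .inr ⟨n, le_rfl, .inr ⟨p, w, q, hw, hn, h.reStep hM hfin hw hne hp hq⟩⟩
  by_cases hpq : p = q
  · obtain ⟨g, hg, -⟩ := h.desc M id hM.toIsFolded (isHom_id M) (path_nil_iff.2 hpq)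
    exact .inl ⟨g, hg⟩
  · exact .inr ⟨0, Nat.zero_le n, .inl ⟨rfl, p, q, h.iStep hM hfin hpq⟩⟩

end IsUniversal

lemma stepCost_of_isomorphic {c : ℕ} (h : StepCost M N c) (hNZ : N.Isomorphic Z) :
    StepCost M Z c := by
  rcases h with ⟨hc, p, q, hpq, X, Y, hX, hY, hYN⟩ |
    ⟨p, w, q, hw, hc, ⟨X, Y, hX, hY, hYN⟩, ψ, hψinj, hψ⟩
  · exact .inl ⟨hc, p, q, hpq, X, Y, hX, hY, hYN.trans hNZ⟩
  · obtain ⟨e, he, -⟩ := id hNZ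
    exact .inr ⟨p, w, q, hw, hc, ⟨X, Y, hX, hY, hYN.trans hNZ⟩, e ∘ ψ,
      e.injective.comp hψinj, he.comp hψ⟩

lemma costLT_pair {c₁ c₂ n : ℕ} (h : c₁ + c₂ ≤ n) (h₁ : c₁ < n) : costLT [c₁, c₂] [n, 0] := by
  rcases h.lt_or_eq with hlt | heq
  · exact .inr (.inl ⟨rfl, by simpa using hlt⟩)
  · exact .inr (.inr ⟨rfl, by simpa using heq, .rel h₁⟩)

/-- There is a sequence of one or two steps from `M` to `N` whose cost precedes `(n, 0)`. -/
def HasCheaperSteps (M N : Autom A) (n : ℕ) : Prop :=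
  (∃ c, StepCost M N c ∧ costLT [c] [n, 0]) ∨
  ∃ (L : Autom A) (c₁ c₂ : ℕ), StepCost M L c₁ ∧ StepCost L N c₂ ∧ costLT [c₁, c₂] [n, 0]

/-- `C` can be imposed in two stages: first let `w₁` join `p` to `q`, then let `w₂` join two states
of the automaton so obtained. -/
structure Constraint.Splits (C : M.Constraint) (p : M.Q) (w₁ : List (Ltr A)) (q : M.Q)
    (w₂ : List (Ltr A)) : Prop where
  joins : ∀ (Z : Autom A) (χ : M.Q → Z.Q), Z.IsFolded → C Z χ → joins p w₁ q Z χ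
  residual : ∀ (L : Autom A) (l : M.Q → L.Q), Autom.joins p w₁ q L l →
    ∃ a b, ∀ (Z : Autom A) (χ : L.Q → Z.Q), Z.IsFolded → L.IsHom Z χ →
      (C Z (χ ∘ l) ↔ Autom.joins a w₂ b Z χ)

theorem IsUniversal.hasCheaperSteps {C : M.Constraint} (h : IsUniversal M C N f) (hM : M.IsCore)
    (hfin : (collisionSet f).Finite) (hno : ¬ ∃ g, N.IsHom M g) {w₁ w₂ : List (Ltr A)}
    (hC : C.Splits p w₁ q w₂) (hw₁ : IsReducedWord w₁) (hw₂ : IsReducedWord w₂) {n : ℕ}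
    (hn : w₁.length + w₂.length ≤ n) (hn₁ : w₁.length < n) : HasCheaperSteps M N n := by
  have hjoin := hC.joins N f h.folded h.holds
  obtain ⟨L, l, hl⟩ := exists_isFreeJoin hM h.folded h.hom hfin hw₁ hjoin
  obtain ⟨a, b, hab⟩ := hC.residual L l hl.holds
  obtain ⟨k, hkl, hk'⟩ := h.exists_factor hl.toIsUniversal hjoin
  have hk : IsUniversal L (joins a w₂ b) N k := hk'.congr hab
  have hkfin : (collisionSet k).Finite := finite_collisionSet_of_comp (hkl ▸ hfin) hl.cofinite
  rcases hl.toIsUniversal.exists_isHom_or_stepCost hM hl.finite hw₁ with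
    ⟨g, hg⟩ | ⟨c₁, hc₁, hML⟩
  · have hN : IsUniversal M (joins (g a) w₂ (g b)) N (k ∘ l) :=
      hk.precomp hl.hom hg (hg.comp_eq_id hl.hom hl.acc hl.folded.det)
        (hl.hom.comp_eq_id hg hM.acc hM.det)
    obtain ⟨c, -, hMN⟩ :=
      (hN.exists_isHom_or_stepCost hM (hkl ▸ hfin) hw₂).resolve_left hno
    exact .inl ⟨c, hMN, .inl (by simp)⟩
  rcases hk.exists_isHom_or_stepCost hl.isCore hkfin hw₂ with ⟨g, hg⟩ | ⟨c₂, hc₂, hLN⟩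
  · have hiso : L.Isomorphic N := hk.hom.isomorphic hg
      (hk.hom.comp_eq_id hg hl.acc hl.folded.det) (hg.comp_eq_id hk.hom h.acc h.folded.det)
    exact .inl ⟨c₁, stepCost_of_isomorphic hML hiso, .inl (by simp)⟩
  · exact .inr ⟨L, c₁, c₂, hML, hLN,
      costLT_pair ((Nat.add_le_add hc₁ hc₂).trans hn) (hc₁.trans_lt hn₁)⟩

end Steps

section Splittings

variable {p q m m' : M.Q} {w u v w₁ w₂ w₃ : List (Ltr A)} {f : M.Q → N.Q}

lemma IsUniversal.comp_merge (hf : IsUniversal M (joins p w q) N f) {r s : N.Q}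
    (hr : N.Path (f m) u r) (hs : N.Path (f m') v s) {g : N.Q → Z.Q}
    (hg : IsUniversal N (joins r [] s) Z g) :
    IsUniversal M (joins p w q ⊓ joins m (u ++ wordInv v) m') Z (g ∘ f) := by
  refine (hf.comp hg).congr fun Y χ hY hχ ↦ ?_
  have hmerge : ∀ k, N.IsHom Y k → k ∘ f = χ →
      (joins r [] s Y k ↔ joins m (u ++ wordInv v) m' Y χ) := by
    rintro k hk rfl
    have hs' := hs.map hk
    refine path_nil_iff.trans (Iff.trans ?_ (hY.det.path_append_iff (hr.map hk)).symm)
    rw [hY.dual.path_wordInv_iff]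
    exact ⟨fun h ↦ h ▸ hs', fun h ↦ hY.det.path_unique h hs'⟩
  constructor
  · rintro ⟨k, hk, rfl, hrs⟩
    exact ⟨hf.holds.map hk, (hmerge k hk rfl).1 hrs⟩
  · rintro ⟨hpath, hm⟩
    obtain ⟨k, hk, rfl⟩ := hf.desc Y χ hY hχ hpath
    exact ⟨k, hk, rfl, (hmerge k hk rfl).2 hm⟩

lemma splits_of_old (p : M.Q) (w : List (Ltr A)) (q m m' : M.Q) :
    (joins p w q ⊓ joins m [] m').Splits m [] m' w where
  joins _ _ _ h := h.2
  residual _ l hl := ⟨l p, l q, fun _ _ _ hχ ↦ ⟨And.left, fun h ↦ ⟨h, hl.map hχ⟩⟩⟩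

lemma splits_of_mixed (p : M.Q) (w₁ w₂ : List (Ltr A)) (q m : M.Q) :
    (joins p (w₁ ++ w₂) q ⊓ joins m ([] ++ wordInv w₁) p).Splits p w₁ m w₂ where
  joins _ _ hZ h := hZ.dual.path_wordInv_iff.1 h.2
  residual _ l hl := ⟨l m, l q, fun _ _ hZ hχ ↦
    ⟨fun h ↦ (hZ.det.path_append_iff (hl.map hχ)).1 h.1, fun h ↦
      ⟨(hl.map hχ).append h, hZ.dual.path_wordInv_iff.2 (hl.map hχ)⟩⟩⟩

lemma IsFolded.path_conj_iff (hM : M.IsFolded) (hpq : M.Path p w q) :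
    M.Path p (w ++ v ++ wordInv (w ++ v ++ u)) p ↔ M.Path q (v ++ u ++ wordInv v) q := by
  have hinv : w ++ v ++ wordInv (w ++ v ++ u) =
      w ++ (wordInv (v ++ u ++ wordInv v) ++ wordInv w) := by simp
  rw [hinv, hM.det.path_append_iff hpq, ← hM.dual.path_wordInv_iff]
  rw [wordInv_append, wordInv_wordInv, wordInv_wordInv, hM.det.path_append_iff hpq]

lemma splits_of_new (p : M.Q) (w₁ v u w₂ : List (Ltr A)) (q : M.Q) :
    (joins p (w₁ ++ v ++ u ++ (wordInv v ++ w₂)) q ⊓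
      joins p (w₁ ++ v ++ wordInv (w₁ ++ v ++ u)) p).Splits p (w₁ ++ w₂) q
      (v ++ u ++ wordInv v) where
  joins Z χ hZ := by
    rintro ⟨hpath, hloop⟩
    have hassoc : w₁ ++ v ++ u ++ (wordInv v ++ w₂) = w₁ ++ (v ++ u ++ wordInv v ++ w₂) := by simp
    obtain ⟨t, hw₁, ht⟩ := path_append_iff.1 (hassoc ▸ hpath)
    exact hw₁.append ((hZ.det.path_append_iff ((hZ.path_conj_iff hw₁).1 hloop)).1 ht)
  residual L l hl := by
    obtain ⟨t, hw₁, hw₂⟩ := path_append_iff.1 hl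
    refine ⟨t, t, fun Z χ hZ hχ ↦ ⟨fun h ↦ (hZ.path_conj_iff (hw₁.map hχ)).1 h.2, fun h ↦ ⟨?_, ?_⟩⟩⟩
    · have := (hw₁.map hχ).append (Path.append h (hw₂.map hχ))
      simpa [joins] using this
    · exact (hZ.path_conj_iff (hw₁.map hχ)).2 h

end Splittings

section Exchange

namespace IsFreeJoin

variable {p q : M.Q} {w : List (Ltr A)} {L : Autom A} {f : M.Q → L.Q} {g : L.Q → N.Q} {r s : L.Q}

lemma hasCheaperSteps_of_mem_range (hf : IsFreeJoin M p w q L f) (hM : M.IsCore)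
    (hw : IsReducedWord w) (hne : w ≠ []) (hg : IsUniversal L (joins r [] s) N g)
    (hfin : (collisionSet (g ∘ f)).Finite) (hno : ¬ ∃ k, N.IsHom M k) (hr : r ∈ Set.range f) :
    HasCheaperSteps M N w.length := by
  obtain ⟨m, rfl⟩ := hr
  rcases hf.cover s with ⟨m', rfl⟩ | ⟨w₁, w₂, rfl, hw₂, hs⟩
  · have hN := hf.comp_merge (path_nil_iff.2 rfl) (path_nil_iff.2 rfl) hg
    exact hN.hasCheaperSteps hM hfin hno (splits_of_old p w q m m')
      (hw.of_infix List.nil_infix) hw (by simp) (List.length_pos_iff.2 hne)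
  · have hN := hf.comp_merge (path_nil_iff.2 rfl) hs hg
    exact hN.hasCheaperSteps hM hfin hno (splits_of_mixed p w₁ w₂ q m) hw.left hw.right
      (by simp) (by simpa using List.length_pos_iff.2 hw₂)

lemma hasCheaperSteps_of_path {w₁ u w₂ : List (Ltr A)}
    (hf : IsFreeJoin M p (w₁ ++ u ++ w₂) q L f) (hM : M.IsCore)
    (hw : IsReducedWord (w₁ ++ u ++ w₂)) (hu : u ≠ []) (hg : IsUniversal L (joins r [] s) N g)
    (hfin : (collisionSet (g ∘ f)).Finite) (hno : ¬ ∃ k, N.IsHom M k)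
    (hr : L.Path (f p) w₁ r) (hs : L.Path (f p) (w₁ ++ u) s) :
    HasCheaperSteps M N (w₁ ++ u ++ w₂).length := by
  obtain ⟨x₁, v, x₂, rfl, rfl, hx⟩ := hw.left.left.exists_cancel hw.right
  have hvu : IsReducedWord (v ++ u) := hw.of_infix ⟨x₁, wordInv v ++ x₂, by simp⟩
  have huv : IsReducedWord (u ++ wordInv v) := hw.of_infix ⟨x₁ ++ v, x₂, by simp⟩
  have hu' : 0 < u.length := List.length_pos_iff.2 hu
  exact (hf.comp_merge hr hs hg).hasCheaperSteps hM hfin hno (splits_of_new p x₁ v u x₂ q) hx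
    (hvu.append_overlap huv hu) (by simp; omega) (by simp; omega)

lemma hasCheaperSteps (hf : IsFreeJoin M p w q L f) (hM : M.IsCore) (hw : IsReducedWord w)
    (hne : w ≠ []) (hg : IsUniversal L (joins r [] s) N g) (hrs : r ≠ s)
    (hfin : (collisionSet (g ∘ f)).Finite) (hno : ¬ ∃ k, N.IsHom M k) :
    HasCheaperSteps M N w.length := by
  rcases hf.cover r with hr | ⟨w₁, w₂, hw₁₂, -, hr⟩
  · exact hf.hasCheaperSteps_of_mem_range hM hw hne hg hfin hno hr
  rcases hf.cover s with hs | ⟨v₁, v₂, hv₁₂, -, hs⟩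
  · exact hf.hasCheaperSteps_of_mem_range hM hw hne hg.joins_symm hfin hno hs
  have hpath_ne : ∀ {v}, L.Path (f p) v r → ¬ L.Path (f p) v s :=
    fun hr hs ↦ hrs (hf.folded.det.path_unique hr hs)
  rcases List.append_eq_append_iff.1 (hw₁₂.symm.trans hv₁₂) with
    ⟨u, rfl, rfl⟩ | ⟨u, rfl, rfl⟩
  · subst hv₁₂
    exact hf.hasCheaperSteps_of_path hM hw (fun hu ↦ hpath_ne hr (by simpa [hu] using hs)) hg hfin
      hno hr hs
  · subst hw₁₂
    exact hf.hasCheaperSteps_of_path hM hw (fun hu ↦ hpath_ne hr (by simpa [hu] using hs))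
      hg.joins_symm hfin hno hs hr

end IsFreeJoin

end Exchange

end Autom

theorem restep_istep_commute_general {A : Type} {M M' N : Autom A} (hM : M.IsCore) {p q : M.Q}
    {w : List (Ltr A)} (hw : IsReducedWord w) (h1 : M.ExpStep p w q M') {r s : M'.Q}
    (h2 : M'.IStep r s N) :
    (∃ c, StepCost M N c ∧ costLT [c] [w.length, 0]) ∨
    (∃ (M'' : Autom A) (c₁ c₂ : ℕ), StepCost M M'' c₁ ∧ StepCost M'' N c₂ ∧
      costLT [c₁, c₂] [w.length, 0]) := by
  obtain ⟨f, hf⟩ := h1.exists_isFreeJoin hM hw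
  obtain ⟨g, hg⟩ := h2.exists_isFreeJoin hf.isCore
  have hne : w ≠ [] := let ⟨_, _, hX, _⟩ := h1; hX.1
  have hno : ¬ ∃ k, N.IsHom M k := by
    rintro ⟨k, hk⟩
    have hid : (f ∘ k) ∘ g = id := hg.hom.comp_eq_id (hf.hom.comp hk) hf.acc hf.folded.det
    have hgrs : g r = g s := Autom.path_nil_iff.1 hg.holds
    exact h2.1 (HasLeftInverse.injective ⟨f ∘ k, congrFun hid⟩ hgrs)
  exact hf.hasCheaperSteps hM hw hne hg.toIsUniversal h2.1
    (Autom.finite_collisionSet_comp hf.finite hg.finite) hno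

/-- Proposition 2.6: a reduced expansion followed by an i-step can be replaced by a
sequence of one or two steps (i-steps or reduced expansions) of strictly smaller cost. -/
theorem restep_istep_commute
    {A : Type} (M M' N : Autom A)
    (hMinv : M.IsInv) (hMred : M.IsRed) (hM'inv : M'.IsInv) (hM'red : M'.IsRed)
    (hNinv : N.IsInv) (hNred : N.IsRed)
    (p : M.Q) (w : List (Ltr A)) (q : M.Q) (hwred : IsReducedWord w)
    (h1 : M.REStep p w q M') (r s : M'.Q) (h2 : M'.IStep r s N) :
    (∃ c, StepCost M N c ∧ costLT [c] [w.length, 0]) ∨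
    (∃ (M'' : Autom A) (c₁ c₂ : ℕ), StepCost M M'' c₁ ∧ StepCost M'' N c₂ ∧
      costLT [c₁, c₂] [w.length, 0]) := by
  exact restep_istep_commute_general (hMinv.isCore hMred) hwred h1.1 h2
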